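/- arXiv:1605.00479 — 3 statements merged into one kernel-verified Lean document; each statement's English description precedes it below -/
import Mathlib

section
/- Let 𝒜 : ℝ^{n₁×n₂} → ℝ^{n₃} be a linear map satisfying the rank restricted isometry property of order 2r with constant δ_{2r} < 1, and let m = min(n₁, n₂). Then every H in the null space of 𝒜 satisfies ∑_{i=1}^r σ_i(H) ≤ θ_{2r}·∑_{i=r+1}^m σ_i(H), where θ_{2r} = sqrt(4(1 + 5δ_{2r} − 4δ_{2r}²)/((1 − δ_{2r})(32 − 25δ_{2r}))). -/
open Finset Matrix

/-- The penalty function `φ_α(t) = α|t| / (1 + α|t|)`. -/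
noncomputable def phi (α t : ℝ) : ℝ := α * |t| / (1 + α * |t|)

/-- The ℓ² norm of a vector. -/
noncomputable def l2 {p : ℕ} (x : Fin p → ℝ) : ℝ := Real.sqrt (∑ i, (x i) ^ 2)

/-- The Frobenius norm of a matrix. -/
noncomputable def frob {n₁ n₂ : ℕ} (X : Matrix (Fin n₁) (Fin n₂) ℝ) : ℝ :=
  Real.sqrt (∑ i, ∑ j, (X i j) ^ 2)

/-- The rectangular `n₁ × n₂` matrix with `σ` on the diagonal and zeros elsewhere. -/
def diagRect {n₁ n₂ : ℕ} (σ : Fin (min n₁ n₂) → ℝ) : Matrix (Fin n₁) (Fin n₂) ℝ :=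
  Matrix.of fun i j =>
    if h : (i : ℕ) = (j : ℕ) then σ ⟨i, lt_min i.isLt (lt_of_eq_of_lt h j.isLt)⟩ else 0

/-- `σ` is the (nonincreasing) sequence of singular values of `X`:
`σ` is antitone, nonnegative, and `X = U (diag σ) Vᵀ` for orthogonal `U`, `V`. -/
def IsSVDVals {n₁ n₂ : ℕ} (X : Matrix (Fin n₁) (Fin n₂) ℝ)
    (σ : Fin (min n₁ n₂) → ℝ) : Prop :=
  Antitone σ ∧ (∀ i, 0 ≤ σ i) ∧
  ∃ (U : Matrix (Fin n₁) (Fin n₁) ℝ) (V : Matrix (Fin n₂) (Fin n₂) ℝ),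
    Uᵀ * U = 1 ∧ Vᵀ * V = 1 ∧ X = U * diagRect σ * Vᵀ

/-- `𝒜` satisfies the rank restricted isometry property of order `r`
with constant `δ ∈ [0,1)`. -/
def RankRIP {n₁ n₂ n₃ : ℕ} (𝒜 : Matrix (Fin n₁) (Fin n₂) ℝ →ₗ[ℝ] (Fin n₃ → ℝ))
    (r : ℕ) (δ : ℝ) : Prop :=
  0 ≤ δ ∧ δ < 1 ∧ ∀ X : Matrix (Fin n₁) (Fin n₂) ℝ, X.rank ≤ r →
    (1 - δ) * (frob X) ^ 2 ≤ (l2 (𝒜 X)) ^ 2 ∧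
    (l2 (𝒜 X)) ^ 2 ≤ (1 + δ) * (frob X) ^ 2

/-!
A thin singular value decomposition `H = U diag(σ) Vᵀ` turns the rank RIP of `𝒜` into an RIP of
`B : x ↦ 𝒜 (U diag(x) Vᵀ)` for sparse vectors `x`, and `B σ = 0`. Let `x` be the restriction of `σ`
to its first `r` entries, `w = σ - x`, and let `P`, `Q`, `W` be the sums of `σ` over the first `r`
indices, over the next `r`, and over the rest. The vertices of the polytope
`{p ∈ [0,1]^m : ∑ p ≤ k}` are `0`-`1` vectors, so `w` is an average of `r`-sparse vectors `uᵢ` whose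
mean square norm is at most `(Q max(P, Q + W) + W (Q + W)) / r`. Apply the RIP to `x ± t (x + uᵢ)`
and average over `i`: the cross term vanishes because `B (x + w) = 0`, and optimizing over `t` gives
`(1 - δ²) P² ≤ δ² (Q max(P, Q + W) + W (Q + W))`. Averaging `2r`-sparse vectors in the same way for
the part of `σ` beyond the first `2r` entries gives `(1 - δ) P² ≤ (1 + δ) max(Q, W / 2) W`. For all
`δ`, `P`, `Q`, `W`, one of the two inequalities yields `P ≤ θ (Q + W)`.
-/

section Polytope

variable {ι : Type*} [Fintype ι]

/-- The polytope `{p ∈ [0,1]^ι : ∑ p_j ≤ k}`, whose vertices are the indicators of the sets of at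
most `k` indices. -/
def cappedCube (ι : Type*) [Fintype ι] (k : ℕ) : Set (ι → ℝ) :=
  Set.Icc 0 1 ∩ {p | ∑ j, p j ≤ k}

variable {k : ℕ} {p : ι → ℝ}

lemma isCompact_cappedCube : IsCompact (cappedCube ι k) :=
  isCompact_Icc.inter_right (isClosed_le (by fun_prop) continuous_const)

lemma convex_cappedCube : Convex ℝ (cappedCube ι k) := by
  refine (convex_Icc 0 1).inter ?_
  simpa using convex_halfSpace_le (∑ j, LinearMap.proj (R := ℝ) (φ := fun _ : ι => ℝ) j).isLinear k

lemma eq_zero_of_add_mem_of_sub_mem_of_mem_extremePoints {E : Type*} [AddCommGroup E] [Module ℝ E]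
    {s : Set E} {x d : E} (hx : x ∈ s.extremePoints ℝ) (hadd : x + d ∈ s) (hsub : x - d ∈ s) :
    d = 0 := by
  have hmid : x ∈ openSegment ℝ (x + d) (x - d) :=
    ⟨1 / 2, 1 / 2, by norm_num, by norm_num, by norm_num, by module⟩
  simpa using (mem_extremePoints.1 hx).2 _ hadd _ hsub hmid

lemma eq_zero_of_mem_extremePoints_cappedCube (hp : p ∈ (cappedCube ι k).extremePoints ℝ)
    {d : ι → ℝ} (hd : ∀ j, |d j| ≤ min (p j) (1 - p j)) (hsum : |∑ j, d j| ≤ k - ∑ j, p j) :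
    d = 0 := by
  have hlow j := abs_le.1 ((hd j).trans (min_le_left _ _))
  have hupp j := abs_le.1 ((hd j).trans (min_le_right _ _))
  have hsum' := abs_le.1 hsum
  have hadd : p + d ∈ cappedCube ι k := by
    refine ⟨⟨fun j => ?_, fun j => ?_⟩, ?_⟩
    · simpa using by linarith [hlow j]
    · simpa using by linarith [hupp j]
    · simpa [sum_add_distrib] using by linarith
  have hsub : p - d ∈ cappedCube ι k := by
    refine ⟨⟨fun j => ?_, fun j => ?_⟩, ?_⟩
    · simpa using by linarith [hlow j]
    · simpa using by linarith [hupp j]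
    · simpa [sum_sub_distrib] using by linarith
  exact eq_zero_of_add_mem_of_sub_mem_of_mem_extremePoints hp hadd hsub

lemma sum_ne_natCast_of_unique_fractional {i : ι} (h0 : 0 < p i) (h1 : p i < 1)
    (hother : ∀ j ≠ i, p j = 0 ∨ p j = 1) (n : ℕ) : ∑ j, p j ≠ n := by
  classical
  intro hn
  have hrest : ∑ j ∈ univ.erase i, p j = #{j ∈ univ.erase i | p j = 1} := by
    rw [card_filter, Nat.cast_sum]
    refine sum_congr rfl fun j hj => ?_
    rcases hother j (ne_of_mem_erase hj) with h | h <;> simp [h]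
  rw [← add_sum_erase _ _ (mem_univ i), hrest] at hn
  generalize #{j ∈ univ.erase i | p j = 1} = l at hn
  have hlt : l < n := by exact_mod_cast (by linarith : (l : ℝ) < n)
  have hlt' : n < l + 1 := by exact_mod_cast (by linarith : (n : ℝ) < l + 1)
  omega

lemma eq_zero_or_one_of_mem_extremePoints_cappedCube
    (hp : p ∈ (cappedCube ι k).extremePoints ℝ) (i : ι) : p i = 0 ∨ p i = 1 := by
  classical
  obtain ⟨⟨hp0, hp1⟩, hpk : ∑ j, p j ≤ k⟩ := hp.1
  let gap : ι → ℝ := fun j => min (p j) (1 - p j)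
  have gap_nonneg (j) : 0 ≤ gap j := le_min (hp0 j) (sub_nonneg.2 (hp1 j))
  have gap_pos {j} (hj : ¬(p j = 0 ∨ p j = 1)) : 0 < gap j :=
    lt_min ((hp0 j).lt_of_ne fun h => hj (.inl h.symm))
      (sub_pos.2 ((hp1 j).lt_of_ne fun h => hj (.inr h)))
  by_contra hi
  rcases hpk.lt_or_eq with hlt | heq
  · obtain ⟨ε, hε, hεgap⟩ : ∃ ε > 0, ε ≤ min (gap i) (k - ∑ j, p j) :=
      ⟨_, lt_min (gap_pos hi) (sub_pos.2 hlt), le_rfl⟩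
    obtain ⟨hεi, hεsum⟩ := le_min_iff.1 hεgap
    have hd : Pi.single i ε = (0 : ι → ℝ) := by
      refine eq_zero_of_mem_extremePoints_cappedCube hp (fun a => ?_) ?_
      · rcases eq_or_ne a i with rfl | hai
        · simpa [gap, abs_of_pos hε] using hεi
        · simpa [gap, hai] using gap_nonneg a
      · simpa [abs_of_pos hε] using hεsum
    exact hε.ne' (by simpa using hd)
  · obtain ⟨j, hji, hj⟩ : ∃ j ≠ i, ¬(p j = 0 ∨ p j = 1) := by
      by_contra! hall
      obtain ⟨hi0, hi1⟩ := lt_min_iff.1 (gap_pos hi)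
      exact sum_ne_natCast_of_unique_fractional hi0 (sub_pos.1 hi1) hall k heq
    obtain ⟨ε, hε, hεgap⟩ : ∃ ε > 0, ε ≤ min (gap i) (gap j) :=
      ⟨_, lt_min (gap_pos hi) (gap_pos hj), le_rfl⟩
    obtain ⟨hεi, hεj⟩ := le_min_iff.1 hεgap
    have hd : Pi.single i ε - Pi.single j ε = (0 : ι → ℝ) := by
      refine eq_zero_of_mem_extremePoints_cappedCube hp (fun a => ?_) (by simp [heq])
      rcases eq_or_ne a i with rfl | hai
      · simpa [gap, hji.symm, abs_of_pos hε] using hεi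
      rcases eq_or_ne a j with rfl | haj
      · simpa [gap, hai, abs_of_pos hε] using hεj
      · simpa [gap, hai, haj] using gap_nonneg a
    exact hε.ne' (by simpa [hji.symm] using congrFun hd i)

lemma mem_convexHull_zero_one_of_mem_cappedCube (hp : p ∈ cappedCube ι k) :
    p ∈ convexHull ℝ {q ∈ cappedCube ι k | ∀ j, q j = 0 ∨ q j = 1} := by
  have hfin : {q ∈ cappedCube ι k | ∀ j, q j = 0 ∨ q j = 1}.Finite :=
    (Set.Finite.pi' fun _ => Set.toFinite {0, 1}).subset fun _ hq => hq.2
  have hsub : (cappedCube ι k).extremePoints ℝ ⊆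
      {q ∈ cappedCube ι k | ∀ j, q j = 0 ∨ q j = 1} := fun q hq =>
    ⟨hq.1, eq_zero_or_one_of_mem_extremePoints_cappedCube hq⟩
  rw [← closure_convexHull_extremePoints isCompact_cappedCube convex_cappedCube] at hp
  exact closure_minimal (convexHull_mono hsub) (hfin.isClosed_convexHull ℝ) hp

end Polytope

section SparseVectors

variable {ι E : Type*} [Fintype ι] [NormedAddCommGroup E] [InnerProductSpace ℝ E]

/-- `x` has at most `k` nonzero entries. -/
def IsSparse (k : ℕ) (x : ι → ℝ) : Prop := #{j | x j ≠ 0} ≤ k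

/-- The restricted isometry property of order `k` with constant `δ`, for linear maps on vectors;
the bounds `0 ≤ δ < 1` are not part of it. -/
def SparseRIP (B : (ι → ℝ) →ₗ[ℝ] E) (k : ℕ) (δ : ℝ) : Prop :=
  ∀ x, IsSparse k x → (1 - δ) * (x ⬝ᵥ x) ≤ ‖B x‖ ^ 2 ∧ ‖B x‖ ^ 2 ≤ (1 + δ) * (x ⬝ᵥ x)

variable {B : (ι → ℝ) →ₗ[ℝ] E} {k k₁ k₂ : ℕ} {c δ : ℝ} {p w x v : ι → ℝ}

lemma isSparse_of_forall_notMem {S : Finset ι} (hS : #S ≤ k) (hx : ∀ j ∉ S, x j = 0) :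
    IsSparse k x :=
  (card_le_card fun j hj => by_contra fun hjS => by simp [hx j hjS] at hj).trans hS

lemma isSparse_of_zero_one (hp : ∀ j, p j = 0 ∨ p j = 1) (hsum : ∑ j, p j ≤ k) :
    IsSparse k p := by
  have hcard : (#{j | p j ≠ 0} : ℝ) = ∑ j, p j := by
    rw [card_filter, Nat.cast_sum]
    exact sum_congr rfl fun j _ => by rcases hp j with h | h <;> simp [h]
  rw [← hcard] at hsum
  exact_mod_cast hsum

lemma IsSparse.mono (hx : IsSparse k x) (hvx : ∀ j, x j = 0 → v j = 0) : IsSparse k v :=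
  isSparse_of_forall_notMem hx fun j hj => hvx j (by simpa using hj)

lemma sum_div_max_le (hw : 0 ≤ w) (hc : 0 ≤ c) (hsum : ∑ j, w j ≤ k * c) :
    ∑ j, w j / max (w j) c ≤ k := by
  rcases hc.eq_or_lt with rfl | hc
  · have hw0 (j) : w j = 0 := (sum_eq_zero_iff_of_nonneg fun j _ => hw j).1
      (le_antisymm (by simpa using hsum) (sum_nonneg fun j _ => hw j)) j (mem_univ j)
    simp [hw0]
  · calc ∑ j, w j / max (w j) c ≤ ∑ j, w j / c :=
          sum_le_sum fun j _ => div_le_div_of_nonneg_left (hw j) hc (le_max_right _ _)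
      _ = (∑ j, w j) / c := (sum_div _ _ _).symm
      _ ≤ k := div_le_of_le_mul₀ hc.le k.cast_nonneg hsum

lemma exists_isSparse_convexCombination (hw : 0 ≤ w) (hc : 0 ≤ c) (hsum : ∑ j, w j ≤ k * c) :
    ∃ (κ : Type) (_ : Fintype κ) (l : κ → ℝ) (u : κ → ι → ℝ),
      (∀ i, 0 ≤ l i) ∧ ∑ i, l i = 1 ∧ (∀ i, IsSparse k (u i)) ∧
      (∀ i j, w j = 0 → u i j = 0) ∧ ∑ i, l i • u i = w ∧
      ∑ i, l i * (u i ⬝ᵥ u i) = ∑ j, w j * max (w j) c := by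
  let M : ι → ℝ := fun j => if w j = 0 then 0 else max (w j) c
  have hmax_nonneg (j) : 0 ≤ max (w j) c := le_max_of_le_right hc
  have hpM (j) : w j / max (w j) c * M j = w j := by
    by_cases hj : w j = 0
    · simp [M, hj]
    · have : max (w j) c ≠ 0 :=
        (((hw j).lt_of_ne (Ne.symm hj)).trans_le (le_max_left _ _)).ne'
      simp [M, hj, this]
  have hp : (fun j => w j / max (w j) c) ∈ cappedCube ι k :=
    ⟨⟨fun j => div_nonneg (hw j) (hmax_nonneg j),
      fun j => div_le_one_of_le₀ (le_max_left _ _) (hmax_nonneg j)⟩, sum_div_max_le hw hc hsum⟩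
  obtain ⟨κ, _, l, q, hl, hl1, hq, hlq⟩ :=
    mem_convexHull_iff_exists_fintype.1 (mem_convexHull_zero_one_of_mem_cappedCube hp)
  have hlq (j) : ∑ i, l i * q i j = w j / max (w j) c := by simpa using congrFun hlq j
  refine ⟨κ, ‹_›, l, fun i j => q i j * M j, hl, hl1, fun i => ?_, fun i j hj => ?_, ?_, ?_⟩
  · exact (isSparse_of_zero_one (hq i).2 (hq i).1.2).mono fun j hj => by simp [hj]
  · simp [M, hj]
  · ext j
    simp [← mul_assoc, ← sum_mul, hlq, hpM]
  · have hsq (i j) : q i j * M j * (q i j * M j) = q i j * M j ^ 2 := by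
      rcases (hq i).2 j with h | h <;> simp [h, sq]
    calc ∑ i, l i * ∑ j, q i j * M j * (q i j * M j)
        = ∑ j, (∑ i, l i * q i j) * M j ^ 2 := by
          simp only [hsq, mul_sum, sum_mul, mul_assoc]
          exact sum_comm
      _ = ∑ j, w j * M j := sum_congr rfl fun j _ => by rw [hlq, sq, ← mul_assoc, hpM]
      _ = ∑ j, w j * max (w j) c := sum_congr rfl fun j _ => by
          by_cases hj : w j = 0 <;> simp [M, hj]

lemma norm_sum_smul_sq_le {κ : Type*} [Fintype κ] {l : κ → ℝ} (hl : ∀ i, 0 ≤ l i)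
    (hl1 : ∑ i, l i = 1) (y : κ → E) : ‖∑ i, l i • y i‖ ^ 2 ≤ ∑ i, l i * ‖y i‖ ^ 2 :=
  (convexOn_univ_norm.pow (fun _ _ => norm_nonneg _) 2).map_sum_le
    (fun i _ => hl i) hl1 fun _ _ => Set.mem_univ _

lemma dotProduct_self_nonneg (x : ι → ℝ) : 0 ≤ x ⬝ᵥ x := by
  simpa using dotProduct_self_star_nonneg x

lemma SparseRIP.norm_sq_le (hB : SparseRIP B k δ) (hw : 0 ≤ w) (hc : 0 ≤ c)
    (hsum : ∑ j, w j ≤ k * c) : ‖B w‖ ^ 2 ≤ (1 + δ) * ∑ j, w j * max (w j) c := by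
  obtain ⟨κ, _, l, u, hl, hl1, hu, -, hlu, hsq⟩ := exists_isSparse_convexCombination hw hc hsum
  calc ‖B w‖ ^ 2 = ‖∑ i, l i • B (u i)‖ ^ 2 := by simp only [← hlu, map_sum, map_smul]
    _ ≤ ∑ i, l i * ‖B (u i)‖ ^ 2 := norm_sum_smul_sq_le hl hl1 _
    _ ≤ ∑ i, l i * ((1 + δ) * (u i ⬝ᵥ u i)) :=
        sum_le_sum fun i _ => mul_le_mul_of_nonneg_left (hB _ (hu i)).2 (hl i)
    _ = (1 + δ) * ∑ j, w j * max (w j) c := by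
        rw [← hsq, mul_sum]
        exact sum_congr rfl fun i _ => mul_left_comm _ _ _

lemma SparseRIP.two_mul_dotProduct_le (hB : SparseRIP B k δ) {S : Finset ι} (hS : #S ≤ k)
    (hx : ∀ j ∉ S, x j = 0) (hv : ∀ j ∉ S, v j = 0) :
    2 * (x ⬝ᵥ v) ≤ 2 * inner ℝ (B x) (B v) + δ * (x ⬝ᵥ x + v ⬝ᵥ v) := by
  have hadd := (hB (x + v) (isSparse_of_forall_notMem hS fun j hj => by simp [hx j hj, hv j hj])).1
  have hsub := (hB (x - v) (isSparse_of_forall_notMem hS fun j hj => by simp [hx j hj, hv j hj])).2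
  rw [map_add, norm_add_sq_real] at hadd
  rw [map_sub, norm_sub_sq_real] at hsub
  simp only [add_dotProduct, dotProduct_add, sub_dotProduct, dotProduct_sub,
    dotProduct_comm v x] at hadd hsub
  linarith

lemma le_sq_mul_of_forall_two_mul_le {X Z : ℝ} (hX : 0 ≤ X) (hZ : 0 ≤ Z)
    (h : ∀ t : ℝ, 2 * t * X ≤ δ * (X + t ^ 2 * Z)) : X ≤ δ ^ 2 * Z := by
  have hdiscrim : discrim (δ * Z) (-2 * X) (δ * X) ≤ 0 :=
    discrim_le_zero fun t => by linarith [h t]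
  rcases hX.eq_or_lt with rfl | hX
  · positivity
  · refine le_of_mul_le_mul_right ?_ hX
    rw [discrim] at hdiscrim
    linarith

lemma SparseRIP.two_mul_mul_dotProduct_self_le (hB : SparseRIP B (k₁ + k₂) δ)
    (hx : IsSparse k₁ x) (hv : IsSparse k₂ v) (hxv : x ⬝ᵥ v = 0) (t : ℝ) :
    2 * t * (x ⬝ᵥ x) ≤
      2 * t * inner ℝ (B x) (B (x + v)) + δ * (x ⬝ᵥ x + t ^ 2 * (x ⬝ᵥ x + v ⬝ᵥ v)) := by
  classical
  have := hB.two_mul_dotProduct_le (x := x) (v := t • (x + v))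
    ((card_union_le _ _).trans (add_le_add hx hv))
    (fun j hj => by simp_all) (fun j hj => by simp_all)
  simp only [map_smul, inner_smul_right, dotProduct_smul, smul_dotProduct, dotProduct_add,
    add_dotProduct, hxv, dotProduct_comm v x, smul_eq_mul] at this
  linarith

lemma SparseRIP.dotProduct_self_le (hB : SparseRIP B (k₁ + k₂) δ) (hx : IsSparse k₁ x)
    (hxw : ∀ j, x j = 0 ∨ w j = 0) (hw : 0 ≤ w) (hc : 0 ≤ c) (hsum : ∑ j, w j ≤ k₂ * c)
    (hker : B (x + w) = 0) :
    x ⬝ᵥ x ≤ δ ^ 2 * (x ⬝ᵥ x + ∑ j, w j * max (w j) c) := by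
  obtain ⟨κ, _, l, u, hl, hl1, hu, huw, hlu, hsq⟩ := exists_isSparse_convexCombination hw hc hsum
  have hxu (i) : x ⬝ᵥ u i = 0 :=
    sum_eq_zero fun j _ => by rcases hxw j with h | h <;> simp [h, huw]
  have hinner : ∑ i, l i * inner ℝ (B x) (B (x + u i)) = 0 := by
    have : ∑ i, l i • (x + u i) = x + w := by
      simp only [smul_add, sum_add_distrib, ← sum_smul, hl1, one_smul, hlu]
    simp only [← inner_smul_right, ← inner_sum, ← map_smul, ← map_sum, this, hker, inner_zero_right]
  have hsum_sq : ∑ i, l i * (x ⬝ᵥ x + u i ⬝ᵥ u i) = x ⬝ᵥ x + ∑ j, w j * max (w j) c := by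
    simp only [mul_add, sum_add_distrib, ← sum_mul, hl1, one_mul, hsq]
  rw [← hsum_sq]
  refine le_sq_mul_of_forall_two_mul_le (dotProduct_self_nonneg x) (sum_nonneg fun i _ =>
    mul_nonneg (hl i) (add_nonneg (dotProduct_self_nonneg x) (dotProduct_self_nonneg _)))
    fun t => ?_
  calc 2 * t * (x ⬝ᵥ x) = ∑ i, l i * (2 * t * (x ⬝ᵥ x)) := by rw [← sum_mul, hl1, one_mul]
    _ ≤ ∑ i, l i * (2 * t * inner ℝ (B x) (B (x + u i)) +
          δ * (x ⬝ᵥ x + t ^ 2 * (x ⬝ᵥ x + u i ⬝ᵥ u i))) :=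
        sum_le_sum fun i _ => mul_le_mul_of_nonneg_left
          (hB.two_mul_mul_dotProduct_self_le hx (hu i) (hxu i) t) (hl i)
    _ = 2 * t * ∑ i, l i * inner ℝ (B x) (B (x + u i)) + δ * ((∑ i, l i) * (x ⬝ᵥ x) +
          t ^ 2 * ∑ i, l i * (x ⬝ᵥ x + u i ⬝ᵥ u i)) := by
        simp only [mul_sum, sum_mul, ← sum_add_distrib]
        exact sum_congr rfl fun i _ => by ring
    _ = δ * (x ⬝ᵥ x + t ^ 2 * ∑ i, l i * (x ⬝ᵥ x + u i ⬝ᵥ u i)) := by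
        rw [hinner, hl1]; ring

end SparseVectors

section LeadingBlocks

variable {ι E : Type*} [Fintype ι] [NormedAddCommGroup E] [InnerProductSpace ℝ E]

/-- `T₀` holds the `r` largest entries of `h`, and `T₁` the `r` largest of the remaining ones. Only
the consequences of this that the estimates use are recorded; both sets may have fewer than `r`
elements. -/
structure IsLeadingBlocks (h : ι → ℝ) (r : ℕ) (T₀ T₁ : Finset ι) : Prop where
  card_first_le : #T₀ ≤ r
  card_second_le : #T₁ ≤ r
  disjoint : Disjoint T₀ T₁
  mul_le_sum_first : ∀ j ∉ T₀, r * h j ≤ ∑ i ∈ T₀, h i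
  mul_le_sum_second : ∀ j ∉ T₀, j ∉ T₁ → r * h j ≤ ∑ i ∈ T₁, h i

variable {B : (ι → ℝ) →ₗ[ℝ] E} {h : ι → ℝ} {r : ℕ} {T T₀ T₁ : Finset ι} {c δ : ℝ}

lemma sum_indicator_eq (T : Finset ι) (h : ι → ℝ) :
    ∑ j, (T : Set ι).indicator h j = ∑ j ∈ T, h j :=
  sum_indicator_subset h (subset_univ T)

lemma sum_indicator_mul_max (T : Finset ι) (h : ι → ℝ) (c : ℝ) :
    ∑ j, (T : Set ι).indicator h j * max ((T : Set ι).indicator h j) c =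
      ∑ j ∈ T, h j * max (h j) c := by
  rw [← sum_indicator_eq T fun j => h j * max (h j) c]
  refine sum_congr rfl fun j _ => ?_
  by_cases hj : j ∈ T <;> simp [hj]

lemma isSparse_indicator (hT : #T ≤ r) : IsSparse r ((T : Set ι).indicator h) :=
  isSparse_of_forall_notMem hT fun j hj => by simp [hj]

lemma sq_sum_le_mul_dotProduct_indicator {S : Finset ι} (hTS : T ⊆ S) (hT : #T ≤ r) :
    (∑ j ∈ T, h j) ^ 2 ≤ r * ((S : Set ι).indicator h ⬝ᵥ (S : Set ι).indicator h) :=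
  calc (∑ j ∈ T, h j) ^ 2 ≤ r * ∑ j ∈ T, h j ^ 2 :=
        sq_sum_le_card_mul_sum_sq.trans (by gcongr)
    _ ≤ r * ∑ j ∈ S, h j ^ 2 := by gcongr
    _ = r * ((S : Set ι).indicator h ⬝ᵥ (S : Set ι).indicator h) := by
        rw [← sum_indicator_eq, dotProduct]
        congr! 2 with j
        by_cases hj : j ∈ S <;> simp [hj, sq]

variable [DecidableEq ι]

lemma indicator_add_indicator_compl (T : Finset ι) (h : ι → ℝ) :
    (T : Set ι).indicator h + ((Tᶜ : Finset ι) : Set ι).indicator h = h := by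
  rw [coe_compl, Set.indicator_self_add_compl]

namespace IsLeadingBlocks

lemma sum_compl_first (hT : IsLeadingBlocks h r T₀ T₁) (f : ι → ℝ) :
    ∑ j ∈ T₀ᶜ, f j = ∑ j ∈ T₁, f j + ∑ j ∈ (T₀ ∪ T₁)ᶜ, f j := by
  have hsub : T₁ ⊆ T₀ᶜ := fun j hj => mem_compl.2 (disjoint_right.1 hT.disjoint hj)
  rw [← sum_sdiff hsub, add_comm, compl_union, sdiff_eq_inter_compl]

lemma mul_sum_compl_mul_max_le (hT : IsLeadingBlocks h r T₀ T₁) (hr : 0 < r) (hh : 0 ≤ h) :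
    r * ∑ j ∈ T₀ᶜ, h j * max (h j) ((∑ i ∈ T₀ᶜ, h i) / r) ≤
      (∑ j ∈ T₁, h j) * max (∑ j ∈ T₀, h j) (∑ j ∈ T₀ᶜ, h j) +
        (∑ j ∈ (T₀ ∪ T₁)ᶜ, h j) * ∑ j ∈ T₀ᶜ, h j := by
  have hr' : (0 : ℝ) < r := Nat.cast_pos.2 hr
  have hle : ∑ j ∈ T₁, h j ≤ ∑ j ∈ T₀ᶜ, h j := by
    rw [hT.sum_compl_first h]
    exact le_add_of_nonneg_right (sum_nonneg fun j _ => hh j)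
  generalize ∑ j ∈ T₀ᶜ, h j = T at hle ⊢
  have hmul (j) : r * (h j * max (h j) (T / r)) = h j * max (r * h j) T := by
    rw [mul_left_comm, mul_max_of_nonneg _ _ hr'.le, mul_div_cancel₀ _ hr'.ne']
  rw [hT.sum_compl_first, mul_add, mul_sum, mul_sum, sum_mul, sum_mul]
  simp only [hmul]
  refine add_le_add (sum_le_sum fun j hj => ?_) (sum_le_sum fun j hj => ?_)
  · have := hT.mul_le_sum_first j (disjoint_right.1 hT.disjoint hj)
    exact mul_le_mul_of_nonneg_left (max_le_max_right _ this) (hh j)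
  · obtain ⟨hj₀, hj₁⟩ : j ∉ T₀ ∧ j ∉ T₁ := by simpa using hj
    have := (hT.mul_le_sum_second j hj₀ hj₁).trans hle
    exact mul_le_mul_of_nonneg_left (max_le this le_rfl) (hh j)

lemma one_sub_sq_mul_sq_sum_le (hT : IsLeadingBlocks h r T₀ T₁) (hr : 0 < r) (hh : 0 ≤ h)
    (hB : SparseRIP B (2 * r) δ) (hδ : δ ^ 2 ≤ 1) (hker : B h = 0) :
    (1 - δ ^ 2) * (∑ j ∈ T₀, h j) ^ 2 ≤
      δ ^ 2 * ((∑ j ∈ T₁, h j) * max (∑ j ∈ T₀, h j) (∑ j ∈ T₀ᶜ, h j) +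
        (∑ j ∈ (T₀ ∪ T₁)ᶜ, h j) * ∑ j ∈ T₀ᶜ, h j) := by
  have hr' : (r : ℝ) ≠ 0 := Nat.cast_ne_zero.2 hr.ne'
  let x := (T₀ : Set ι).indicator h
  let w := ((T₀ᶜ : Finset ι) : Set ι).indicator h
  let c := (∑ j ∈ T₀ᶜ, h j) / r
  have hRIP : x ⬝ᵥ x ≤ δ ^ 2 * (x ⬝ᵥ x + ∑ j, w j * max (w j) c) :=
    SparseRIP.dotProduct_self_le (k₂ := r) (two_mul r ▸ hB)
      (isSparse_indicator hT.card_first_le) (fun j => by by_cases hj : j ∈ T₀ <;> simp [x, w, hj])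
      (Set.indicator_nonneg fun j _ => hh j) (div_nonneg (sum_nonneg fun j _ => hh j) r.cast_nonneg)
      (by rw [sum_indicator_eq, mul_div_cancel₀ _ hr'])
      (by rw [indicator_add_indicator_compl, hker])
  rw [sum_indicator_mul_max] at hRIP
  calc (1 - δ ^ 2) * (∑ j ∈ T₀, h j) ^ 2
      ≤ (1 - δ ^ 2) * (r * (x ⬝ᵥ x)) :=
        mul_le_mul_of_nonneg_left
          (sq_sum_le_mul_dotProduct_indicator Subset.rfl hT.card_first_le) (sub_nonneg.2 hδ)
    _ = r * ((1 - δ ^ 2) * (x ⬝ᵥ x)) := mul_left_comm _ _ _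
    _ ≤ r * (δ ^ 2 * ∑ j ∈ T₀ᶜ, h j * max (h j) c) :=
        mul_le_mul_of_nonneg_left (by linarith) r.cast_nonneg
    _ = δ ^ 2 * (r * ∑ j ∈ T₀ᶜ, h j * max (h j) c) := mul_left_comm _ _ _
    _ ≤ _ := mul_le_mul_of_nonneg_left (hT.mul_sum_compl_mul_max_le hr hh) (sq_nonneg δ)

lemma one_sub_mul_sq_sum_le (hT : IsLeadingBlocks h r T₀ T₁) (hr : 0 < r) (hh : 0 ≤ h)
    (hB : SparseRIP B (2 * r) δ) (hδ : δ ≤ 1) (hker : B h = 0) :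
    (1 - δ) * (∑ j ∈ T₀, h j) ^ 2 ≤
      (1 + δ) * (max (∑ j ∈ T₁, h j) ((∑ j ∈ (T₀ ∪ T₁)ᶜ, h j) / 2) *
        ∑ j ∈ (T₀ ∪ T₁)ᶜ, h j) := by
  have hr' : (0 : ℝ) < r := Nat.cast_pos.2 hr
  set W := ∑ j ∈ (T₀ ∪ T₁)ᶜ, h j with hW
  set N := max (∑ j ∈ T₁, h j) (W / 2)
  have hN : 0 ≤ N := le_max_of_le_left (sum_nonneg fun j _ => hh j)
  let x := ((T₀ ∪ T₁ : Finset ι) : Set ι).indicator h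
  let w := (((T₀ ∪ T₁)ᶜ : Finset ι) : Set ι).indicator h
  have hx : IsSparse (2 * r) x := isSparse_indicator <|
    (card_union_le _ _).trans (two_mul r ▸ add_le_add hT.card_first_le hT.card_second_le)
  have hnorm : ‖B x‖ = ‖B w‖ := by
    have : B x + B w = 0 := by rw [← map_add, indicator_add_indicator_compl, hker]
    rw [eq_neg_of_add_eq_zero_left this, norm_neg]
  have hmean : ∑ j, w j ≤ (2 * r : ℕ) * (N / r) := by
    have : (2 * r : ℕ) * (N / r) = 2 * N := by
      push_cast
      rw [mul_assoc, mul_div_cancel₀ _ hr'.ne']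
    rw [sum_indicator_eq, this]
    linarith [le_max_right (∑ j ∈ T₁, h j) (W / 2)]
  have hmax : ∑ j, w j * max (w j) (N / r) = W * (N / r) := by
    rw [sum_indicator_mul_max, hW, sum_mul]
    refine sum_congr rfl fun j hj => ?_
    obtain ⟨hj₀, hj₁⟩ : j ∉ T₀ ∧ j ∉ T₁ := by simpa using hj
    rw [max_eq_right]
    exact (le_div_iff₀' hr').2 ((hT.mul_le_sum_second j hj₀ hj₁).trans (le_max_left _ _))
  have hw : 0 ≤ w := Set.indicator_nonneg fun j _ => hh j
  calc (1 - δ) * (∑ j ∈ T₀, h j) ^ 2 ≤ (1 - δ) * (r * (x ⬝ᵥ x)) :=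
        mul_le_mul_of_nonneg_left
          (sq_sum_le_mul_dotProduct_indicator subset_union_left hT.card_first_le) (sub_nonneg.2 hδ)
    _ = r * ((1 - δ) * (x ⬝ᵥ x)) := mul_left_comm _ _ _
    _ ≤ r * ‖B w‖ ^ 2 := by rw [← hnorm]; exact mul_le_mul_of_nonneg_left (hB x hx).1 r.cast_nonneg
    _ ≤ r * ((1 + δ) * (W * (N / r))) := by
        rw [← hmax]
        exact mul_le_mul_of_nonneg_left (hB.norm_sq_le hw (by positivity) hmean) r.cast_nonneg
    _ = (1 + δ) * (N * W) := by field_simp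

end IsLeadingBlocks

lemma card_filter_le_val_lt {m s t : ℕ} (hst : s ≤ t) :
    #{i : Fin m | s ≤ i ∧ i < t} = min m t - min m s := by
  have hsdiff : ({i | s ≤ i ∧ i < t} : Finset (Fin m)) =
      ({i | i < t} : Finset (Fin m)) \ ({i | i < s} : Finset (Fin m)) := by
    ext; simp [and_comm]
  rw [hsdiff, card_sdiff_of_subset (monotone_filter_right _ fun _ _ hi => hi.trans_le hst),
    Fin.card_filter_val_lt, Fin.card_filter_val_lt]

lemma card_mul_le_sum_of_antitone {m : ℕ} {h : Fin m → ℝ} (hh : Antitone h) {S : Finset (Fin m)}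
    {j : Fin m} (hS : ∀ i ∈ S, i ≤ j) : #S * h j ≤ ∑ i ∈ S, h i := by
  simpa using card_nsmul_le_sum S h (h j) fun i hi => hh (hS i hi)

lemma isLeadingBlocks_of_antitone {m : ℕ} {h : Fin m → ℝ} (hh : Antitone h) (r : ℕ) :
    IsLeadingBlocks h r {i | i < r} {i | r ≤ i ∧ i < 2 * r} where
  card_first_le := by simp [Fin.card_filter_val_lt]
  card_second_le := by rw [card_filter_le_val_lt (by omega)]; omega
  disjoint := disjoint_filter.2 fun _ _ hi => by omega
  mul_le_sum_first j hj := by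
    have hj : r ≤ j := by simpa using hj
    convert card_mul_le_sum_of_antitone hh (j := j) fun i hi => ?_
    · rw [Fin.card_filter_val_lt]; omega
    · have := (mem_filter.1 hi).2; omega
  mul_le_sum_second j hj₀ hj₁ := by
    have hj : 2 * r ≤ j := by simp only [mem_filter_univ, not_and, not_lt] at hj₀ hj₁; omega
    convert card_mul_le_sum_of_antitone hh (j := j) fun i hi => ?_
    · rw [card_filter_le_val_lt (by omega)]; omega
    · have := (mem_filter.1 hi).2; omega

end LeadingBlocks

section NullSpaceConstant

variable {δ P Q W : ℝ}

/-- The square of the null space constant `θ_{2r}`, as a function of `δ = δ_{2r}`; the estimates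
bound squares of sums, so the square root is taken only at the end. -/
noncomputable def nullSpaceConstSq (δ : ℝ) : ℝ :=
  4 * (1 + 5 * δ - 4 * δ ^ 2) / ((1 - δ) * (32 - 25 * δ))

lemma le_nullSpaceConstSq_mul_iff (hδ : δ < 1) {X Y : ℝ} :
    X ≤ nullSpaceConstSq δ * Y ↔
      (1 - δ) * (32 - 25 * δ) * X ≤ 4 * (1 + 5 * δ - 4 * δ ^ 2) * Y := by
  have hden : 0 < (1 - δ) * (32 - 25 * δ) := mul_pos (by linarith) (by linarith)
  rw [nullSpaceConstSq, div_mul_eq_mul_div, le_div_iff₀' hden]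

lemma le_nullSpaceConstSq_mul_of_nine_tenths_le (hδ : 9 / 10 ≤ δ) (hδ1 : δ < 1) {X Y : ℝ}
    (hY : 0 ≤ Y) (h : (1 - δ) * X ≤ (1 + δ) * (Y / 2)) : X ≤ nullSpaceConstSq δ * Y := by
  have hpoly : (32 - 25 * δ) * (1 + δ) ≤ 8 * (1 + 5 * δ - 4 * δ ^ 2) := by nlinarith
  rw [le_nullSpaceConstSq_mul_iff hδ1]
  nlinarith

lemma le_nullSpaceConstSq_mul_of_half_le (hδ : 1 / 2 ≤ δ) (hδ1 : δ < 1) {X Y : ℝ}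
    (hY : 0 ≤ Y) (h : (1 - δ) * X ≤ (1 + δ) * (Y / 4)) : X ≤ nullSpaceConstSq δ * Y := by
  have hpoly : (32 - 25 * δ) * (1 + δ) ≤ 16 * (1 + 5 * δ - 4 * δ ^ 2) := by nlinarith
  rw [le_nullSpaceConstSq_mul_iff hδ1]
  nlinarith

lemma le_nullSpaceConstSq_mul_of_le_nine_tenths (hδ0 : 0 ≤ δ) (hδ : δ ≤ 9 / 10) {X Y : ℝ}
    (hY : 0 ≤ Y) (h : (12 - 13 * δ ^ 2) * X ≤ 12 * δ ^ 2 * Y) : X ≤ nullSpaceConstSq δ * Y := by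
  have hpoly : 3 * δ ^ 2 * ((1 - δ) * (32 - 25 * δ)) ≤
      (1 + 5 * δ - 4 * δ ^ 2) * (12 - 13 * δ ^ 2) := by
    have hu := sub_nonneg.2 hδ
    nlinarith [mul_nonneg hδ0 hu, mul_nonneg hδ0 (pow_nonneg hu 2),
      mul_nonneg hδ0 (pow_nonneg hu 3)]
  have hpos : 0 < 12 - 13 * δ ^ 2 := by nlinarith
  rw [le_nullSpaceConstSq_mul_iff (by linarith)]
  refine le_of_mul_le_mul_left ?_ hpos
  have hden : 0 ≤ (1 - δ) * (32 - 25 * δ) := mul_nonneg (by linarith) (by linarith)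
  nlinarith [mul_le_mul_of_nonneg_left h hden]

lemma sq_le_nullSpaceConstSq_mul_sq (hδ0 : 0 ≤ δ) (hδ1 : δ < 1) (hQ : 0 ≤ Q)
    (hW : 0 ≤ W)
    (hpolar : (1 - δ ^ 2) * P ^ 2 ≤ δ ^ 2 * (Q * max P (Q + W) + W * (Q + W)))
    (hmean : (1 - δ) * P ^ 2 ≤ (1 + δ) * (max Q (W / 2) * W)) :
    P ^ 2 ≤ nullSpaceConstSq δ * (Q + W) ^ 2 := by
  rcases le_total (9 / 10) δ with hδ | hδ
  · have hmax : max Q (W / 2) * W ≤ (Q + W) ^ 2 / 2 := by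
      rcases max_cases Q (W / 2) with ⟨h, -⟩ | ⟨h, -⟩ <;> rw [h] <;> nlinarith
    refine le_nullSpaceConstSq_mul_of_nine_tenths_le hδ hδ1 (sq_nonneg _) (hmean.trans ?_)
    gcongr
  by_cases hcase : P ≤ Q + W ∨ 3 * Q ≤ Q + W
  · have htail : Q * max P (Q + W) + W * (Q + W) ≤ (Q + W) ^ 2 + P ^ 2 / 12 := by
      rcases max_cases P (Q + W) with ⟨h, hle⟩ | ⟨h, -⟩ <;> rw [h]
      · rcases hcase with hPT | hQT
        · nlinarith
        · nlinarith [sq_nonneg (P - 2 * (Q + W))]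
      · nlinarith
    refine le_nullSpaceConstSq_mul_of_le_nine_tenths hδ0 hδ (sq_nonneg _) ?_
    nlinarith [mul_le_mul_of_nonneg_left htail (sq_nonneg δ)]
  · obtain ⟨hTP, hTQ⟩ := not_or.1 hcase |>.imp not_le.1 not_le.1
    have hP0 : 0 < P := (add_nonneg hQ hW).trans_lt hTP
    have hδ_half : 1 / 2 ≤ δ := by
      rw [max_eq_left hTP.le] at hpolar
      have htail : Q * P + W * (Q + W) ≤ P ^ 2 := by nlinarith
      have : (1 - δ ^ 2) * P ^ 2 ≤ δ ^ 2 * P ^ 2 :=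
        hpolar.trans (mul_le_mul_of_nonneg_left htail (sq_nonneg δ))
      have := le_of_mul_le_mul_right this (pow_pos hP0 2)
      nlinarith
    refine le_nullSpaceConstSq_mul_of_half_le hδ_half hδ1 (sq_nonneg _) (hmean.trans ?_)
    rw [max_eq_left (by linarith)]
    gcongr
    nlinarith [sq_nonneg (Q - W)]

end NullSpaceConstant

section NullSpaceProperty

variable {ι E : Type*} [Fintype ι] [DecidableEq ι] [NormedAddCommGroup E] [InnerProductSpace ℝ E]
  {B : (ι → ℝ) →ₗ[ℝ] E} {h : ι → ℝ} {r : ℕ} {T₀ T₁ : Finset ι} {δ : ℝ}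

theorem IsLeadingBlocks.sum_le (hT : IsLeadingBlocks h r T₀ T₁) (hh : 0 ≤ h) (hδ0 : 0 ≤ δ)
    (hδ1 : δ < 1) (hB : SparseRIP B (2 * r) δ) (hker : B h = 0) :
    ∑ j ∈ T₀, h j ≤ √(nullSpaceConstSq δ) * ∑ j ∈ T₀ᶜ, h j := by
  have hsum (S : Finset ι) : 0 ≤ ∑ j ∈ S, h j := sum_nonneg fun j _ => hh j
  rcases r.eq_zero_or_pos with rfl | hr
  · have hT₀ : T₀ = ∅ := card_eq_zero.1 (Nat.le_zero.1 hT.card_first_le)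
    rw [hT₀, sum_empty]
    exact mul_nonneg (Real.sqrt_nonneg _) (hsum _)
  have hpolar := hT.one_sub_sq_mul_sq_sum_le hr hh hB (pow_le_one₀ hδ0 hδ1.le) hker
  have hmean := hT.one_sub_mul_sq_sum_le hr hh hB hδ1.le hker
  rw [hT.sum_compl_first] at hpolar
  calc ∑ j ∈ T₀, h j ≤ √(nullSpaceConstSq δ * (∑ j ∈ T₀ᶜ, h j) ^ 2) := by
        refine Real.le_sqrt_of_sq_le ?_
        rw [hT.sum_compl_first]
        exact sq_le_nullSpaceConstSq_mul_sq hδ0 hδ1 (hsum _) (hsum _) hpolar hmean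
    _ = √(nullSpaceConstSq δ) * ∑ j ∈ T₀ᶜ, h j := by
        rw [Real.sqrt_mul' _ (sq_nonneg _), Real.sqrt_sq (hsum _)]

end NullSpaceProperty

section SingularValues

variable {n₁ n₂ : ℕ} {ι E : Type*} [Fintype ι] [DecidableEq ι]
  [NormedAddCommGroup E] [InnerProductSpace ℝ E]

/-- The linear map `x ↦ P diag(x) Qᵀ`, which sends the vector of singular values of a matrix to the
matrix when `P` and `Q` hold its singular vectors. -/
def svdMap (P : Matrix (Fin n₁) ι ℝ) (Q : Matrix (Fin n₂) ι ℝ) :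
    (ι → ℝ) →ₗ[ℝ] Matrix (Fin n₁) (Fin n₂) ℝ :=
  mulRightLinearMap (Fin n₁) ℝ Qᵀ ∘ₗ mulLeftLinearMap ι ℝ P ∘ₗ diagonalLinearMap ι ℝ ℝ

variable {P : Matrix (Fin n₁) ι ℝ} {Q : Matrix (Fin n₂) ι ℝ}

lemma svdMap_apply (x : ι → ℝ) : svdMap P Q x = P * diagonal x * Qᵀ := rfl

lemma frob_sq_eq_trace (X : Matrix (Fin n₁) (Fin n₂) ℝ) : frob X ^ 2 = (Xᵀ * X).trace := by
  have hnonneg : 0 ≤ ∑ i, ∑ j, X i j ^ 2 :=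
    sum_nonneg fun _ _ => sum_nonneg fun _ _ => sq_nonneg _
  rw [frob, Real.sq_sqrt hnonneg, sum_comm]
  simp only [trace, diag_apply, mul_apply, transpose_apply, sq]

lemma frob_svdMap_sq (hP : Pᵀ * P = 1) (hQ : Qᵀ * Q = 1) (x : ι → ℝ) :
    frob (svdMap P Q x) ^ 2 = x ⬝ᵥ x :=
  calc frob (svdMap P Q x) ^ 2 = (Q * (diagonal x * (Pᵀ * P) * diagonal x) * Qᵀ).trace := by
        rw [frob_sq_eq_trace, svdMap_apply]
        simp only [transpose_mul, transpose_transpose, diagonal_transpose, Matrix.mul_assoc]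
    _ = x ⬝ᵥ x := by
        rw [hP, Matrix.mul_one, trace_mul_comm, ← Matrix.mul_assoc, hQ, Matrix.one_mul,
          diagonal_mul_diagonal, trace_diagonal, dotProduct]

lemma rank_svdMap_le {k : ℕ} {x : ι → ℝ} (hx : IsSparse k x) : (svdMap P Q x).rank ≤ k :=
  calc (svdMap P Q x).rank ≤ (diagonal x).rank :=
        (rank_mul_le_left _ _).trans (rank_mul_le_right _ _)
    _ ≤ k := by rwa [rank_diagonal, Fintype.card_subtype]

lemma sparseRIP_comp_svdMap {𝒜 : Matrix (Fin n₁) (Fin n₂) ℝ →ₗ[ℝ] E} {k : ℕ} {δ : ℝ}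
    (h𝒜 : ∀ X : Matrix (Fin n₁) (Fin n₂) ℝ, X.rank ≤ k →
      (1 - δ) * frob X ^ 2 ≤ ‖𝒜 X‖ ^ 2 ∧ ‖𝒜 X‖ ^ 2 ≤ (1 + δ) * frob X ^ 2)
    (hP : Pᵀ * P = 1) (hQ : Qᵀ * Q = 1) : SparseRIP (𝒜 ∘ₗ svdMap P Q) k δ := fun x hx => by
  simpa only [frob_svdMap_sq hP hQ, LinearMap.comp_apply] using
    h𝒜 (svdMap P Q x) (rank_svdMap_le hx)

/-- The matrix whose columns are the first `m` standard basis vectors. -/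
def leadingColumns {n m : ℕ} (h : m ≤ n) : Matrix (Fin n) (Fin m) ℝ :=
  (1 : Matrix (Fin n) (Fin n) ℝ).submatrix id (Fin.castLE h)

lemma transpose_mul_self_leadingColumns {n m : ℕ} (h : m ≤ n) :
    (leadingColumns h)ᵀ * leadingColumns h = 1 := by
  rw [leadingColumns, transpose_submatrix, ← submatrix_mul _ _ _ _ _ Function.bijective_id,
    transpose_one, Matrix.one_mul, submatrix_one _ (Fin.castLE_injective h)]

lemma transpose_mul_self_mul {l m n : Type*} [Fintype l] [Fintype m] [DecidableEq m]
    [DecidableEq n] {U : Matrix l m ℝ} {V : Matrix m n ℝ} (hU : Uᵀ * U = 1) (hV : Vᵀ * V = 1) :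
    (U * V)ᵀ * (U * V) = 1 := by
  rw [transpose_mul, Matrix.mul_assoc, ← Matrix.mul_assoc Uᵀ, hU, Matrix.one_mul, hV]

lemma diagRect_eq_svdMap (σ : Fin (min n₁ n₂) → ℝ) :
    diagRect σ =
      svdMap (leadingColumns (min_le_left n₁ n₂)) (leadingColumns (min_le_right n₁ n₂)) σ := by
  ext i j
  simp only [svdMap_apply, diagRect, leadingColumns, of_apply, mul_apply (N := _ᵀ), mul_diagonal,
    transpose_apply, submatrix_apply, one_apply, id_eq, Fin.ext_iff, Fin.val_castLE]
  split_ifs with hij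
  · rw [Fintype.sum_eq_single ⟨i, lt_min i.isLt (hij ▸ j.isLt)⟩ fun a ha => ?_]
    · simp [hij]
    · simp [Ne.symm (Fin.val_ne_of_ne ha)]
  · refine (Fintype.sum_eq_zero _ fun a => ?_).symm
    rcases eq_or_ne (i : ℕ) a with hia | hia
    · simp [← hia, Ne.symm hij]
    · simp [hia]

lemma IsSVDVals.exists_eq_svdMap {X : Matrix (Fin n₁) (Fin n₂) ℝ} {σ : Fin (min n₁ n₂) → ℝ}
    (hσ : IsSVDVals X σ) :
    ∃ (P : Matrix (Fin n₁) (Fin (min n₁ n₂)) ℝ) (Q : Matrix (Fin n₂) (Fin (min n₁ n₂)) ℝ),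
      Pᵀ * P = 1 ∧ Qᵀ * Q = 1 ∧ X = svdMap P Q σ := by
  obtain ⟨-, -, U, V, hU, hV, rfl⟩ := hσ
  refine ⟨U * leadingColumns (min_le_left n₁ n₂), V * leadingColumns (min_le_right n₁ n₂),
    transpose_mul_self_mul hU (transpose_mul_self_leadingColumns _),
    transpose_mul_self_mul hV (transpose_mul_self_leadingColumns _), ?_⟩
  simp only [diagRect_eq_svdMap, svdMap_apply, transpose_mul, Matrix.mul_assoc]

end SingularValues

theorem stmt8_general {n₁ n₂ r : ℕ} {E : Type*} [NormedAddCommGroup E] [InnerProductSpace ℝ E]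
    (𝒜 : Matrix (Fin n₁) (Fin n₂) ℝ →ₗ[ℝ] E) {δ : ℝ} (hδ0 : 0 ≤ δ) (hδ1 : δ < 1)
    (hRIP : ∀ X : Matrix (Fin n₁) (Fin n₂) ℝ, X.rank ≤ 2 * r →
      (1 - δ) * frob X ^ 2 ≤ ‖𝒜 X‖ ^ 2 ∧ ‖𝒜 X‖ ^ 2 ≤ (1 + δ) * frob X ^ 2)
    {H : Matrix (Fin n₁) (Fin n₂) ℝ} (hH : 𝒜 H = 0) {σH : Fin (min n₁ n₂) → ℝ}
    (hσ : IsSVDVals H σH) :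
    ∑ i ∈ {i : Fin (min n₁ n₂) | i < r}, σH i ≤
      √(nullSpaceConstSq δ) * ∑ i ∈ {i : Fin (min n₁ n₂) | r ≤ i}, σH i := by
  obtain ⟨P, Q, hP, hQ, rfl⟩ := hσ.exists_eq_svdMap
  have hblocks := isLeadingBlocks_of_antitone hσ.1 r
  simpa only [compl_filter, not_lt] using
    hblocks.sum_le hσ.2.1 hδ0 hδ1 (sparseRIP_comp_svdMap hRIP hP hQ) hH

lemma l2_sq_eq_norm_sq {p : ℕ} (x : Fin p → ℝ) : l2 x ^ 2 = ‖WithLp.toLp 2 x‖ ^ 2 := by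
  rw [l2, Real.sq_sqrt (sum_nonneg fun _ _ => sq_nonneg _), EuclideanSpace.real_norm_sq_eq]

theorem stmt8 {n₁ n₂ n₃ r : ℕ}
    (𝒜 : Matrix (Fin n₁) (Fin n₂) ℝ →ₗ[ℝ] (Fin n₃ → ℝ)) (δ : ℝ)
    (hRIP : RankRIP 𝒜 (2 * r) δ) :
    ∀ H : Matrix (Fin n₁) (Fin n₂) ℝ, 𝒜 H = 0 →
      ∀ σH : Fin (min n₁ n₂) → ℝ, IsSVDVals H σH →
        ∑ i ∈ Finset.univ.filter (fun i : Fin (min n₁ n₂) => (i : ℕ) < r), σH i ≤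
          Real.sqrt (4 * (1 + 5 * δ - 4 * δ ^ 2) / ((1 - δ) * (32 - 25 * δ))) *
            ∑ i ∈ Finset.univ.filter (fun i : Fin (min n₁ n₂) => r ≤ (i : ℕ)), σH i := by
  exact fun H hH σH hσ => stmt8_general
    ((WithLp.linearEquiv 2 ℝ (Fin n₃ → ℝ)).symm.toLinearMap ∘ₗ 𝒜) hRIP.1 hRIP.2.1
    (fun X hX => by simpa [l2_sq_eq_norm_sq] using hRIP.2.2 X hX) (by simp [hH]) hσ
end

section
/- For every 0 ≤ δ ≤ 0.4663, the quantity θ(δ) = sqrt(4(1 + 5δ − 4δ²)/((1 − δ)(32 − 25δ))) satisfies 1/θ(δ) − 1 ≥ 0.05; equivalently, θ(δ) ≤ 20/21. -/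
/-! On `δ < 1` the function `θ` is nondecreasing, so its values on `[0, 0.4663]` are bounded by
`θ(0.4663)`, which lies just below `20 / 21`. -/

/-- The function `θ` of a restricted isometry constant `δ` that occurs in null space property
bounds. Where the radicand is negative or its denominator vanishes, the value is
the junk value `0`. -/
noncomputable def theta (δ : ℝ) : ℝ :=
  Real.sqrt (4 * (1 + 5 * δ - 4 * δ ^ 2) / ((1 - δ) * (32 - 25 * δ)))

lemma theta_denom_pos {δ : ℝ} (hδ : δ < 1) : 0 < (1 - δ) * (32 - 25 * δ) :=
  mul_pos (by linarith) (by linarith)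

lemma theta_pos_iff {δ : ℝ} (hδ : δ < 1) : 0 < theta δ ↔ 0 < 1 + 5 * δ - 4 * δ ^ 2 := by
  rw [theta, Real.sqrt_pos, div_pos_iff_of_pos_right (theta_denom_pos hδ),
    mul_pos_iff_of_pos_left four_pos]

lemma theta_monotoneOn : MonotoneOn theta (Set.Iio 1) := by
  intro a ha b hb hab
  rw [Set.mem_Iio, ← sub_pos] at ha hb
  refine Real.sqrt_le_sqrt ?_
  rw [div_le_div_iff₀ (theta_denom_pos (sub_pos.mp ha)) (theta_denom_pos (sub_pos.mp hb)),
    ← sub_nonneg]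
  -- The cross difference vanishes at `a = b`; its cofactor is expanded in `1 - a` and `1 - b`.
  calc
    0 ≤ 4 * (b - a) * (14 + 50 * ((1 - a) + (1 - b)) + 103 * ((1 - a) * (1 - b))) :=
      mul_nonneg (by linarith) (by positivity)
    _ = 4 * (1 + 5 * b - 4 * b ^ 2) * ((1 - a) * (32 - 25 * a))
        - 4 * (1 + 5 * a - 4 * a ^ 2) * ((1 - b) * (32 - 25 * b)) := by ring

lemma theta_endpoint_le : theta 0.4663 ≤ 20 / 21 := by
  rw [theta, Real.sqrt_le_left (by norm_num)]
  norm_num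

theorem stmt9 (δ : ℝ) (h0 : 0 ≤ δ) (h1 : δ ≤ 0.4663) :
    1 / Real.sqrt (4 * (1 + 5 * δ - 4 * δ ^ 2) / ((1 - δ) * (32 - 25 * δ))) - 1 ≥ 0.05 ∧
    Real.sqrt (4 * (1 + 5 * δ - 4 * δ ^ 2) / ((1 - δ) * (32 - 25 * δ))) ≤ 20 / 21 := by
  change 1 / theta δ - 1 ≥ 0.05 ∧ theta δ ≤ 20 / 21
  have endpoint_lt_one : (0.4663 : ℝ) < 1 := by norm_num
  have hδ : δ < 1 := h1.trans_lt endpoint_lt_one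
  have radicand_num_pos : 0 < 1 + 5 * δ - 4 * δ ^ 2 := by
    linarith [mul_nonneg h0 (sub_nonneg.mpr hδ.le)]
  have theta_le : theta δ ≤ 20 / 21 :=
    (theta_monotoneOn hδ endpoint_lt_one h1).trans theta_endpoint_le
  have le_one_div_theta : 1 / (20 / 21) ≤ 1 / theta δ :=
    one_div_le_one_div_of_le ((theta_pos_iff hδ).mpr radicand_num_pos) theta_le
  exact ⟨by linarith, theta_le⟩
end

section
/- Let τ > 0 and X ∈ ℝ^{n₁×n₂} with singular value decomposition X = U Σ Vᵀ, where Σ = diag(σ₁, …, σ_m). Then the matrix W = U D_τ(Σ) Vᵀ, where D_τ(Σ) = diag(max(σ_i − τ, 0)), is the unique minimizer over W ∈ ℝ^{n₁×n₂} of (1/2)‖X − W‖_F² + τ‖W‖_*. -/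
open Finset Matrix

/-!
Let `W` be the matrix obtained from `X` by soft thresholding. The residual `X - W` has singular
values `min (σ i) τ`, so its operator norm is at most `τ`, and it shares its singular vectors with
`W`. Hence `⟪X - W, W⟫ = τ ‖W‖_*`, while the duality of the operator and nuclear norms gives
`⟪X - W, W'⟫ ≤ τ ‖W'‖_*` for all `W'`: that is, `X - W` is a subgradient of `τ ‖·‖_*` at `W`.
Expanding `‖(X - W) + (W - W')‖²`, the objective at `W'` exceeds the one at `W` by at least
`‖W - W'‖² / 2`.
-/

lemma conjTranspose_submatrix_mul_submatrix_eq_one {R m n r : Type*} [NonAssocSemiring R] [Star R]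
    [Fintype m] [DecidableEq n] [DecidableEq r] {U : Matrix m n R} (hU : Uᴴ * U = 1)
    {e : r → n} (he : Function.Injective e) :
    (U.submatrix id e)ᴴ * U.submatrix id e = 1 := by
  rw [conjTranspose_submatrix, ← submatrix_mul _ _ e id e Function.bijective_id, hU,
    submatrix_one e he]

section OperatorNorm

open scoped Matrix.Norms.L2Operator

variable {𝕜 m n : Type*} [RCLike 𝕜] [Fintype m] [Fintype n] [DecidableEq n]

lemma norm_apply_le_l2_opNorm (M : Matrix m n 𝕜) (i : m) (j : n) : ‖M i j‖ ≤ ‖M‖ := by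
  have h := l2_opNorm_mulVec M (EuclideanSpace.single j (1 : 𝕜))
  rw [PiLp.norm_single, norm_one, mul_one] at h
  refine le_trans ?_ ((PiLp.norm_apply_le _ i).trans h)
  simp

lemma l2_opNorm_le_one_of_conjTranspose_mul_self_eq_one {A : Matrix m n 𝕜} (hA : Aᴴ * A = 1) :
    ‖A‖ ≤ 1 := by
  have hone : ‖(1 : Matrix n n 𝕜)‖ ≤ 1 := by
    rw [← diagonal_one, l2_opNorm_diagonal]
    exact (pi_norm_le_iff_of_nonneg zero_le_one).2 fun _ => norm_one.le
  rw [← hA, l2_opNorm_conjTranspose_mul_self, ← sq] at hone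
  exact (sq_le_one_iff₀ (norm_nonneg A)).1 hone

end OperatorNorm

/-- The soft-thresholding operator `D_τ` acting on a family of singular values. -/
def softThreshold {r : Type*} (τ : ℝ) (σ : r → ℝ) : r → ℝ := fun k => max (σ k - τ) 0

section OfSVD

variable {𝕜 m n r : Type*} [RCLike 𝕜] [Fintype r] [DecidableEq r]

/-- The matrix `A * diag s * Bᴴ` with singular values `s`, whose singular vectors are the columns
of `A` and `B`. This is the thin form of the singular value decomposition: `A` and `B` are meant to
have orthonormal columns (`Aᴴ * A = 1`, `Bᴴ * B = 1`) and need not be square. -/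
def ofSVD (A : Matrix m r 𝕜) (s : r → ℝ) (B : Matrix n r 𝕜) : Matrix m n 𝕜 :=
  A * diagonal (fun k => (s k : 𝕜)) * Bᴴ

lemma ofSVD_sub (A : Matrix m r 𝕜) (s t : r → ℝ) (B : Matrix n r 𝕜) :
    ofSVD A s B - ofSVD A t B = ofSVD A (s - t) B := by
  simp only [ofSVD, ← Matrix.sub_mul, ← Matrix.mul_sub, diagonal_sub, Pi.sub_apply,
    RCLike.ofReal_sub]

lemma ofSVD_apply (A : Matrix m r 𝕜) (s : r → ℝ) (B : Matrix n r 𝕜) (i : m) (j : n) :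
    ofSVD A s B i j = ∑ k, A i k * s k * star (B j k) := by
  rw [ofSVD, Matrix.mul_apply]
  simp only [mul_diagonal, conjTranspose_apply]

lemma ofSVD_sub_ofSVD_softThreshold (A : Matrix m r 𝕜) (σ : r → ℝ) (B : Matrix n r 𝕜) (τ : ℝ) :
    ofSVD A σ B - ofSVD A (softThreshold τ σ) B = ofSVD A (fun k => min (σ k) τ) B := by
  have hsub (k : r) : σ k - softThreshold τ σ k = min (σ k) τ := by
    grind [softThreshold]
  rw [ofSVD_sub]
  exact congrArg (ofSVD A · B) (funext hsub)

variable [Fintype m] [Fintype n]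

lemma mul_ofSVD_mul_conjTranspose {l p : Type*} (U : Matrix l m 𝕜) (A : Matrix m r 𝕜) (s : r → ℝ)
    (B : Matrix n r 𝕜) (V : Matrix p n 𝕜) :
    U * ofSVD A s B * Vᴴ = ofSVD (U * A) s (V * B) := by
  simp only [ofSVD, conjTranspose_mul, Matrix.mul_assoc]

lemma trace_conjTranspose_mul_ofSVD (G : Matrix m n 𝕜) (A : Matrix m r 𝕜) (t : r → ℝ)
    (B : Matrix n r 𝕜) :
    (Gᴴ * ofSVD A t B).trace = ∑ k, (Bᴴ * Gᴴ * A) k k * t k := by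
  rw [ofSVD, ← Matrix.mul_assoc, trace_mul_comm]
  simp only [← Matrix.mul_assoc, trace, diag_apply, mul_diagonal]

lemma trace_conjTranspose_ofSVD_mul_ofSVD {A : Matrix m r 𝕜} {B : Matrix n r 𝕜}
    (hA : Aᴴ * A = 1) (hB : Bᴴ * B = 1) (s t : r → ℝ) :
    ((ofSVD A s B)ᴴ * ofSVD A t B).trace = ∑ k, (s k * t k : 𝕜) := by
  have hcore : Bᴴ * (ofSVD A s B)ᴴ * A = diagonal fun k => (s k : 𝕜) := by
    simp only [ofSVD, conjTranspose_mul, conjTranspose_conjTranspose, diagonal_conjTranspose]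
    calc Bᴴ * (B * (diagonal (star fun k => (s k : 𝕜)) * Aᴴ)) * A
        = (Bᴴ * B) * diagonal (star fun k => (s k : 𝕜)) * (Aᴴ * A) := by
          simp only [Matrix.mul_assoc]
      _ = diagonal fun k => (s k : 𝕜) := by
          rw [hA, hB, Matrix.one_mul, Matrix.mul_one]
          exact congrArg diagonal (funext fun k => RCLike.conj_ofReal (s k))
  simp only [trace_conjTranspose_mul_ofSVD, hcore, diagonal_apply_eq]

section OperatorNorm

open scoped Matrix.Norms.L2Operator

variable [DecidableEq n]

lemma l2_opNorm_ofSVD_le {A : Matrix m r 𝕜} {B : Matrix n r 𝕜} (hA : Aᴴ * A = 1)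
    (hB : Bᴴ * B = 1) {s : r → ℝ} {τ : ℝ} (hτ : 0 ≤ τ) (hs : ∀ k, |s k| ≤ τ) :
    ‖ofSVD A s B‖ ≤ τ := by
  have hdiag : ‖diagonal fun k => (s k : 𝕜)‖ ≤ τ := by
    rw [l2_opNorm_diagonal, pi_norm_le_iff_of_nonneg hτ]
    exact fun k => (RCLike.norm_ofReal (s k)).trans_le (hs k)
  calc ‖ofSVD A s B‖ ≤ ‖A‖ * ‖diagonal fun k => (s k : 𝕜)‖ * ‖Bᴴ‖ :=
        (l2_opNorm_mul _ _).trans (by gcongr; exact l2_opNorm_mul _ _)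
    _ ≤ 1 * τ * 1 := by
        rw [l2_opNorm_conjTranspose]
        gcongr
        · exact l2_opNorm_le_one_of_conjTranspose_mul_self_eq_one hA
        · exact l2_opNorm_le_one_of_conjTranspose_mul_self_eq_one hB
    _ = τ := by ring

lemma re_trace_conjTranspose_mul_ofSVD_le (G : Matrix m n 𝕜) {A : Matrix m r 𝕜}
    {B : Matrix n r 𝕜} (hA : Aᴴ * A = 1) (hB : Bᴴ * B = 1) {t : r → ℝ} (ht : ∀ k, 0 ≤ t k) :
    RCLike.re (Gᴴ * ofSVD A t B).trace ≤ ‖G‖ * ∑ k, t k := by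
  classical
  have hcore : ‖Bᴴ * Gᴴ * A‖ ≤ ‖G‖ :=
    calc ‖Bᴴ * Gᴴ * A‖ ≤ ‖Bᴴ‖ * ‖Gᴴ‖ * ‖A‖ :=
          (l2_opNorm_mul _ _).trans (by gcongr; exact l2_opNorm_mul _ _)
      _ ≤ 1 * ‖G‖ * 1 := by
          rw [l2_opNorm_conjTranspose, l2_opNorm_conjTranspose]
          gcongr
          · exact l2_opNorm_le_one_of_conjTranspose_mul_self_eq_one hB
          · exact l2_opNorm_le_one_of_conjTranspose_mul_self_eq_one hA
      _ = ‖G‖ := by ring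
  rw [trace_conjTranspose_mul_ofSVD, map_sum, Finset.mul_sum]
  refine Finset.sum_le_sum fun k _ => ?_
  rw [RCLike.re_mul_ofReal]
  exact mul_le_mul_of_nonneg_right
    ((RCLike.re_le_norm _).trans ((norm_apply_le_l2_opNorm _ k k).trans hcore)) (ht k)

end OperatorNorm

lemma re_trace_conjTranspose_ofSVD_mul_ofSVD_le {r' : Type*} [Fintype r'] [DecidableEq r']
    {A : Matrix m r 𝕜} {B : Matrix n r 𝕜} (hA : Aᴴ * A = 1) (hB : Bᴴ * B = 1)
    {A' : Matrix m r' 𝕜} {B' : Matrix n r' 𝕜} (hA' : A'ᴴ * A' = 1) (hB' : B'ᴴ * B' = 1)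
    {s : r → ℝ} {t : r' → ℝ} {τ : ℝ} (hτ : 0 ≤ τ) (hs : ∀ k, |s k| ≤ τ) (ht : ∀ k, 0 ≤ t k) :
    RCLike.re ((ofSVD A s B)ᴴ * ofSVD A' t B').trace ≤ τ * ∑ k, t k := by
  classical
  exact (re_trace_conjTranspose_mul_ofSVD_le _ hA' hB' ht).trans
    (mul_le_mul_of_nonneg_right (l2_opNorm_ofSVD_le hA hB hτ hs)
      (Finset.sum_nonneg fun k _ => ht k))

end OfSVD

section Frobenius

open scoped Matrix.Norms.Frobenius

variable {𝕜 m n : Type*} [RCLike 𝕜] [Fintype m] [Fintype n]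

lemma frobenius_norm_sq_eq_sum {α : Type*} [SeminormedAddCommGroup α] (M : Matrix m n α) :
    ‖M‖ ^ 2 = ∑ i, ∑ j, ‖M i j‖ ^ 2 := by
  have hnonneg : 0 ≤ ∑ i, ∑ j, ‖M i j‖ ^ 2 := by positivity
  simp only [frobenius_norm_def, Real.rpow_two, ← Real.sqrt_eq_rpow, Real.sq_sqrt hnonneg]

lemma frob_eq_frobenius_norm {n₁ n₂ : ℕ} (M : Matrix (Fin n₁) (Fin n₂) ℝ) : frob M = ‖M‖ := by
  simp only [frob, ← sq_abs (M _ _), ← Real.norm_eq_abs, ← frobenius_norm_sq_eq_sum]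
  exact Real.sqrt_sq (norm_nonneg M)

lemma frobenius_norm_sq_eq_re_trace (M : Matrix m n 𝕜) :
    ‖M‖ ^ 2 = RCLike.re (Mᴴ * M).trace := by
  rw [frobenius_norm_sq_eq_sum, Finset.sum_comm]
  simp only [trace, diag_apply, Matrix.mul_apply, conjTranspose_apply, RCLike.star_def,
    RCLike.conj_mul, map_sum, ← RCLike.ofReal_pow, RCLike.ofReal_re]

lemma frobenius_norm_add_sq (M N : Matrix m n 𝕜) :
    ‖M + N‖ ^ 2 = ‖M‖ ^ 2 + 2 * RCLike.re (Mᴴ * N).trace + ‖N‖ ^ 2 := by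
  have hsymm : RCLike.re (Nᴴ * M).trace = RCLike.re (Mᴴ * N).trace := by
    rw [← RCLike.conj_re, ← RCLike.star_def, ← trace_conjTranspose, conjTranspose_mul,
      conjTranspose_conjTranspose]
  simp only [frobenius_norm_sq_eq_re_trace, conjTranspose_add, Matrix.add_mul, Matrix.mul_add,
    trace_add, map_add, hsymm]
  ring

end Frobenius

section SoftThreshold

open scoped Matrix.Norms.Frobenius

variable {𝕜 m n r r' : Type*} [RCLike 𝕜] [Fintype m] [Fintype n]
  [Fintype r] [DecidableEq r] [Fintype r'] [DecidableEq r']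
  {τ : ℝ} {A : Matrix m r 𝕜} {B : Matrix n r 𝕜} {σ : r → ℝ}
  {A' : Matrix m r' 𝕜} {B' : Matrix n r' 𝕜} {σ' : r' → ℝ}

lemma re_trace_ofSVD_min_mul_ofSVD_softThreshold (hA : Aᴴ * A = 1) (hB : Bᴴ * B = 1) :
    RCLike.re ((ofSVD A (fun k => min (σ k) τ) B)ᴴ *
      ofSVD A (softThreshold τ σ) B).trace = τ * ∑ k, softThreshold τ σ k := by
  rw [trace_conjTranspose_ofSVD_mul_ofSVD hA hB, map_sum, Finset.mul_sum]
  refine Finset.sum_congr rfl fun k _ => ?_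
  rw [← RCLike.ofReal_mul, RCLike.ofReal_re]
  rcases le_total (σ k) τ with h | h
  · rw [softThreshold, max_eq_right (sub_nonpos.2 h), mul_zero, mul_zero]
  · rw [min_eq_right h]

theorem softThreshold_quadratic_growth (hτ : 0 ≤ τ) (hA : Aᴴ * A = 1) (hB : Bᴴ * B = 1)
    (hσ : ∀ k, 0 ≤ σ k) (hA' : A'ᴴ * A' = 1) (hB' : B'ᴴ * B' = 1) (hσ' : ∀ k, 0 ≤ σ' k) :
    (1 / 2) * ‖ofSVD A σ B - ofSVD A (softThreshold τ σ) B‖ ^ 2 +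
        τ * ∑ k, softThreshold τ σ k +
        (1 / 2) * ‖ofSVD A (softThreshold τ σ) B - ofSVD A' σ' B'‖ ^ 2 ≤
      (1 / 2) * ‖ofSVD A σ B - ofSVD A' σ' B'‖ ^ 2 + τ * ∑ k, σ' k := by
  have hmin (k : r) : |min (σ k) τ| ≤ τ :=
    (abs_of_nonneg (le_min (hσ k) hτ)).trans_le (min_le_right _ _)
  have hdual := re_trace_conjTranspose_ofSVD_mul_ofSVD_le hA hB hA' hB' hτ hmin hσ'
  have halign := re_trace_ofSVD_min_mul_ofSVD_softThreshold (σ := σ) (τ := τ) hA hB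
  have hexpand := frobenius_norm_add_sq
    (ofSVD A σ B - ofSVD A (softThreshold τ σ) B)
    (ofSVD A (softThreshold τ σ) B - ofSVD A' σ' B')
  rw [sub_add_sub_cancel, ofSVD_sub_ofSVD_softThreshold, Matrix.mul_sub, trace_sub, map_sub,
    halign] at hexpand
  rw [ofSVD_sub_ofSVD_softThreshold]
  linarith

theorem stmt15_general (hτ : 0 ≤ τ) (hA : Aᴴ * A = 1) (hB : Bᴴ * B = 1)
    (hσ : ∀ k, 0 ≤ σ k) (hA' : A'ᴴ * A' = 1) (hB' : B'ᴴ * B' = 1) (hσ' : ∀ k, 0 ≤ σ' k)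
    (hne : ofSVD A' σ' B' ≠ ofSVD A (softThreshold τ σ) B) :
    (1 / 2) * ‖ofSVD A σ B - ofSVD A (softThreshold τ σ) B‖ ^ 2 +
        τ * ∑ k, softThreshold τ σ k <
      (1 / 2) * ‖ofSVD A σ B - ofSVD A' σ' B'‖ ^ 2 + τ * ∑ k, σ' k := by
  have hgap : 0 < ‖ofSVD A (softThreshold τ σ) B - ofSVD A' σ' B'‖ :=
    norm_pos_iff.2 (sub_ne_zero.2 hne.symm)
  have hgrowth := softThreshold_quadratic_growth hτ hA hB hσ hA' hB' hσ'
  linarith [pow_pos hgap 2]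

end SoftThreshold

section DiagRect

variable {n₁ n₂ : ℕ}

lemma diagRect_eq_ofSVD (s : Fin (min n₁ n₂) → ℝ) :
    (diagRect s : Matrix (Fin n₁) (Fin n₂) ℝ) =
      ofSVD (Matrix.submatrix 1 id (Fin.castLE (min_le_left n₁ n₂))) s
        (Matrix.submatrix 1 id (Fin.castLE (min_le_right n₁ n₂))) := by
  ext i j
  simp only [ofSVD_apply, submatrix_apply, id_eq, one_apply, Fin.ext_iff, Fin.val_castLE, diagRect,
    of_apply, star_trivial]
  split_ifs with hij
  · rw [Finset.sum_eq_single ⟨i, lt_min i.isLt (hij.trans_lt j.isLt)⟩]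
    · simp [hij]
    · intro k _ hk
      have hik : (i : ℕ) ≠ k := fun h => hk (Fin.ext h.symm)
      rw [if_neg hik, zero_mul, zero_mul]
    · exact fun h => absurd (Finset.mem_univ _) h
  · exact (Finset.sum_eq_zero fun k _ => by grind).symm

lemma mul_diagRect_mul_transpose (U : Matrix (Fin n₁) (Fin n₁) ℝ) (s : Fin (min n₁ n₂) → ℝ)
    (V : Matrix (Fin n₂) (Fin n₂) ℝ) :
    U * diagRect s * Vᵀ = ofSVD (U.submatrix id (Fin.castLE (min_le_left n₁ n₂))) s
      (V.submatrix id (Fin.castLE (min_le_right n₁ n₂))) := by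
  rw [diagRect_eq_ofSVD, ← conjTranspose_eq_transpose_of_trivial V, mul_ofSVD_mul_conjTranspose]
  exact congrArg₂ (ofSVD · s ·) (mul_submatrix_one (Equiv.refl _) _ U)
    (mul_submatrix_one (Equiv.refl _) _ V)

lemma exists_mul_diagRect_mul_transpose_eq_ofSVD {U : Matrix (Fin n₁) (Fin n₁) ℝ}
    {V : Matrix (Fin n₂) (Fin n₂) ℝ} (hU : Uᵀ * U = 1) (hV : Vᵀ * V = 1) :
    ∃ (A : Matrix (Fin n₁) (Fin (min n₁ n₂)) ℝ) (B : Matrix (Fin n₂) (Fin (min n₁ n₂)) ℝ),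
      Aᴴ * A = 1 ∧ Bᴴ * B = 1 ∧ ∀ s, U * diagRect s * Vᵀ = ofSVD A s B := by
  rw [← conjTranspose_eq_transpose_of_trivial] at hU hV
  exact ⟨_, _, conjTranspose_submatrix_mul_submatrix_eq_one hU (Fin.castLE_injective _),
    conjTranspose_submatrix_mul_submatrix_eq_one hV (Fin.castLE_injective _),
    fun s => mul_diagRect_mul_transpose U s V⟩

end DiagRect

theorem stmt15 {n₁ n₂ : ℕ} (τ : ℝ) (hτ : 0 < τ)
    (X : Matrix (Fin n₁) (Fin n₂) ℝ) (σ : Fin (min n₁ n₂) → ℝ)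
    (U : Matrix (Fin n₁) (Fin n₁) ℝ) (V : Matrix (Fin n₂) (Fin n₂) ℝ)
    (hU : Uᵀ * U = 1) (hV : Vᵀ * V = 1)
    (hant : Antitone σ) (hpos : ∀ i, 0 ≤ σ i)
    (hX : X = U * diagRect σ * Vᵀ) :
    ∀ (W' : Matrix (Fin n₁) (Fin n₂) ℝ) (σ' : Fin (min n₁ n₂) → ℝ),
      IsSVDVals W' σ' →
      W' ≠ U * diagRect (fun i => max (σ i - τ) 0) * Vᵀ →
      (1 / 2) * (frob (X - U * diagRect (fun i => max (σ i - τ) 0) * Vᵀ)) ^ 2 +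
          τ * ∑ i, max (σ i - τ) 0 <
        (1 / 2) * (frob (X - W')) ^ 2 + τ * ∑ i, σ' i := by
  rintro W' σ' ⟨_, hσ', U', V', hU', hV', rfl⟩
  obtain ⟨A, B, hA, hB, hUV⟩ := exists_mul_diagRect_mul_transpose_eq_ofSVD hU hV
  obtain ⟨A', B', hA', hB', hUV'⟩ := exists_mul_diagRect_mul_transpose_eq_ofSVD hU' hV'
  simp only [hX, hUV, hUV', frob_eq_frobenius_norm]
  exact stmt15_general hτ.le hA hB hpos hA' hB' hσ'
end
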